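/- arXiv:0905.1748 — 2 statements merged into one kernel-verified Lean document; each statement's English description precedes it below -/
import Mathlib

section
/- (Sylvester–Franke identity, underlying c₁(Λ^k V) = C(n−1,k−1)·c₁(V) for a rank-n bundle V.) Let K be a field, V a K-vector space of finite dimension n, and k an integer with 1 ≤ k ≤ n. For every linear endomorphism f of V, the determinant of the induced endomorphism Λ^k f of the k-th exterior power Λ^k V equals (det f)^{C(n−1,k−1)}, where C(·,·) is the binomial coefficient. -/
open ExteriorAlgebra

/-- The morphism of exterior algebras induced by a linear map `f` sends the `k`-th exterior
power into the `k`-th exterior power. -/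
theorem ExteriorAlgebra.map_mapsTo_exteriorPower {K V : Type*} [Field K] [AddCommGroup V]
    [Module K V] (k : ℕ) (f : V →ₗ[K] V) :
    ∀ x ∈ ⋀[K]^k V, ExteriorAlgebra.map f x ∈ ⋀[K]^k V := by
  intro x hx
  rw [← ExteriorAlgebra.ιMulti_span_fixedDegree] at hx ⊢
  induction hx using Submodule.span_induction with
  | mem x hx =>
    obtain ⟨v, rfl⟩ := hx
    rw [ExteriorAlgebra.map_apply_ιMulti]
    exact Submodule.subset_span ⟨f ∘ v, rfl⟩
  | zero => simp
  | add x y _ _ hx hy => rw [map_add]; exact Submodule.add_mem _ hx hy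
  | smul c x _ hx => rw [map_smul]; exact Submodule.smul_mem _ c hx

/-- The linear endomorphism `Λ^k f` of the `k`-th exterior power `⋀[K]^k V` functorially
induced by a linear endomorphism `f` of `V`; it is determined by
`Λ^k f (v₁ ∧ ⋯ ∧ v_k) = f v₁ ∧ ⋯ ∧ f v_k`. -/
noncomputable def exteriorPowerMap {K V : Type*} [Field K] [AddCommGroup V] [Module K V]
    (k : ℕ) (f : V →ₗ[K] V) : ⋀[K]^k V →ₗ[K] ⋀[K]^k V :=
  LinearMap.restrict (ExteriorAlgebra.map f).toLinearMap
    (ExteriorAlgebra.map_mapsTo_exteriorPower k f)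

/-!
The map `A ↦ det (Λ^k A)` is multiplicative, and on a diagonal matrix `d` it is the product over all
`k`-element sets `s` of `∏ i ∈ s, d i`. Over a field in which `2` is invertible, a multiplicative
map on square matrices is determined by its values on diagonal matrices: each transvection is
conjugated into its square by a diagonal matrix, so a homomorphism to a commutative monoid sends
it to `1`, and diagonal matrices and transvections generate. This proves the identity for the
generic matrix over the fraction field of `ℤ[Xᵢⱼ]`. Since the entries of the matrix of `Λ^k A` are
minors of `A`, it specializes to every commutative ring, in particular to fields of
characteristic two.
-/

open Matrix Set.powersetCard

section MultiplicativeMaps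

variable {ι R N : Type*} [Fintype ι] [DecidableEq ι] [CommRing R] [CommMonoid N]

theorem diagonal_mul_transvection (d : ι → R) (i j : ι) (c : R) :
    diagonal d * transvection i j (c * d j) = transvection i j (d i * c) * diagonal d := by
  ext a b
  rw [diagonal_mul, mul_diagonal]
  simp only [transvection, Matrix.add_apply, one_apply, single_apply]
  grind

theorem map_transvection_eq_one (two_unit : IsUnit (2 : R)) (φ : Matrix ι ι R →* N)
    {i j : ι} (hij : i ≠ j) (c : R) : φ (transvection i j c) = 1 := by
  let d : ι → R := Function.update 1 i 2
  have diagonal_unit : IsUnit (φ (diagonal d)) := by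
    refine (isUnit_diagonal.2 (Pi.isUnit_iff.2 fun l ↦ ?_)).map φ
    rcases eq_or_ne l i with rfl | hl
    · simpa [d] using two_unit
    · simp [d, hl]
  have transvection_unit : IsUnit (φ (transvection i j c)) := by
    refine ((isUnit_iff_isUnit_det _).2 ?_).map φ
    rw [det_transvection_of_ne i j hij]
    exact isUnit_one
  have conj_eq_sq : diagonal d * transvection i j c =
      transvection i j c * transvection i j c * diagonal d := by
    have := diagonal_mul_transvection d i j c
    rwa [show d i = 2 from Function.update_self .., two_mul,
      show d j = 1 from Function.update_of_ne hij.symm .., mul_one,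
      ← transvection_mul_transvection_same i j hij] at this
  have idempotent : φ (transvection i j c) * φ (transvection i j c) = φ (transvection i j c) := by
    refine diagonal_unit.mul_right_cancel ?_
    calc φ (transvection i j c) * φ (transvection i j c) * φ (diagonal d)
      _ = φ (diagonal d * transvection i j c) := by rw [conj_eq_sq, map_mul, map_mul]
      _ = φ (transvection i j c) * φ (diagonal d) := by rw [map_mul, mul_comm]
  exact transvection_unit.mul_eq_left.1 idempotent

theorem matrix_monoidHom_ext_diagonal {K : Type*} [Field K] [NeZero (2 : K)]
    {φ ψ : Matrix ι ι K →* N} (h : ∀ d : ι → K, φ (diagonal d) = ψ (diagonal d)) : φ = ψ := by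
  have two_unit : IsUnit (2 : K) := (NeZero.ne 2).isUnit
  ext A
  refine diagonal_transvection_induction (fun B ↦ φ B = ψ B) A (fun d _ ↦ h d) (fun t ↦ ?_)
    fun B C hB hC ↦ by rw [map_mul, map_mul, hB, hC]
  exact (map_transvection_eq_one two_unit φ t.hij t.c).trans
    (map_transvection_eq_one two_unit ψ t.hij t.c).symm

end MultiplicativeMaps

section CompoundMatrix

variable {I J L R : Type*} [LinearOrder I] [LinearOrder J] [LinearOrder L] [CommRing R] (k : ℕ)

/-- The `k`-th compound matrix of `A`, whose entries are the `k × k` minors of `A`; it represents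
the `k`-th exterior power of the linear map given by `A`. Rows and columns are indexed by
`k`-element sets, and the elements of each set are taken in increasing order. -/
def compoundMatrix (A : Matrix I J R) :
    Matrix (Set.powersetCard I k) (Set.powersetCard J k) R :=
  .of fun s t ↦ (A.submatrix (ofFinEmbEquiv.symm s) (ofFinEmbEquiv.symm t)).det

theorem compoundMatrix_map {S : Type*} [CommRing S] (φ : R →+* S) (A : Matrix I J R) :
    compoundMatrix k (A.map φ) = (compoundMatrix k A).map φ := by
  ext s t
  exact (φ.map_det _).symm

theorem det_compoundMatrix_map {S : Type*} [CommRing S] [Fintype I] (φ : R →+* S)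
    (A : Matrix I I R) :
    (compoundMatrix k (A.map φ)).det = φ (compoundMatrix k A).det := by
  rw [compoundMatrix_map, RingHom.map_det, RingHom.mapMatrix_apply]

theorem toMatrix_exteriorPower_map {M N : Type*} [AddCommGroup M] [Module R M] [AddCommGroup N]
    [Module R N] [Fintype I] [Finite J] (b : Module.Basis I R M) (c : Module.Basis J R N)
    (f : M →ₗ[R] N) :
    LinearMap.toMatrix (b.exteriorPower k) (c.exteriorPower k) (exteriorPower.map k f) =
      compoundMatrix k (LinearMap.toMatrix b c f) := by
  ext s t
  rw [LinearMap.toMatrix_apply, exteriorPower.basis_apply, exteriorPower.map_apply_ιMulti_family,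
    exteriorPower.basis_repr_apply, exteriorPower.ιMulti_family,
    exteriorPower.ιMultiDual_apply_ιMulti, ← det_transpose]
  congr 1
  ext p q
  simp [LinearMap.toMatrix_apply]

/-- The **Cauchy–Binet formula**: this is the functoriality of the exterior power, read in bases. -/
theorem compoundMatrix_mul [Finite I] [Fintype J] [Finite L] (A : Matrix I J R)
    (B : Matrix J L R) :
    compoundMatrix k (A * B) = compoundMatrix k A * compoundMatrix k B := by
  have := Fintype.ofFinite L
  let bI := Pi.basisFun R I
  let bJ := Pi.basisFun R J
  let bL := Pi.basisFun R L
  rw [← LinearMap.toMatrix_toLin bL bI (A * B), toLin_mul bL bJ bI, ← toMatrix_exteriorPower_map,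
    exteriorPower.map_comp, LinearMap.toMatrix_comp _ (bJ.exteriorPower k),
    toMatrix_exteriorPower_map, toMatrix_exteriorPower_map, LinearMap.toMatrix_toLin,
    LinearMap.toMatrix_toLin]

theorem compoundMatrix_diagonal (d : I → R) :
    compoundMatrix k (diagonal d) = diagonal fun s ↦ ∏ i ∈ s.val, d i := by
  ext s t
  rcases eq_or_ne s t with rfl | hst
  · rw [diagonal_apply_eq, compoundMatrix, of_apply,
      submatrix_diagonal _ _ (ofFinEmbEquiv.symm s).injective, det_diagonal,
      ← Finset.map_orderEmbOfFin_univ s.val s.prop, Finset.prod_map]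
    rfl
  · obtain ⟨i, his, hit⟩ := (exists_mem_notMem_iff_ne s t).1 hst
    obtain ⟨p, rfl⟩ := (mem_range_ofFinEmbEquiv_symm_iff_mem s i).2 his
    rw [diagonal_apply_ne _ hst]
    refine det_eq_zero_of_row_eq_zero p fun q ↦ diagonal_apply_ne _ fun hpq ↦ hit ?_
    exact hpq ▸ (mem_range_ofFinEmbEquiv_symm_iff_mem t _).1 ⟨q, rfl⟩

theorem compoundMatrix_one : compoundMatrix k (1 : Matrix I I R) = 1 := by
  simp [← diagonal_one, compoundMatrix_diagonal]

/-- Taking the `k`-th compound of square matrices, as a monoid homomorphism; composed with the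
determinant it is a multiplicative function of a matrix. -/
def compoundMatrixHom [Fintype I] :
    Matrix I I R →* Matrix (Set.powersetCard I k) (Set.powersetCard I k) R where
  toFun := compoundMatrix k
  map_one' := compoundMatrix_one k
  map_mul' := compoundMatrix_mul k

end CompoundMatrix

theorem prod_powersetCard_prod {α N : Type*} [CommMonoid N] (s : Finset α) {k : ℕ} (hk : 1 ≤ k)
    (f : α → N) :
    ∏ t ∈ s.powersetCard k, ∏ a ∈ t, f a = (∏ a ∈ s, f a) ^ (s.card - 1).choose (k - 1) := by
  classical
  have swap : ∏ t ∈ s.powersetCard k, ∏ a ∈ t, f a =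
      ∏ a ∈ s, ∏ t ∈ s.powersetCard k with {a} ⊆ t, f a :=
    Finset.prod_comm' fun t a ↦ by grind
  rw [swap, ← Finset.prod_pow]
  refine Finset.prod_congr rfl fun a ha ↦ ?_
  rw [Finset.prod_const, Finset.card_filter_powersetCard_subset {a} s k
    (Finset.singleton_subset_iff.2 ha) hk, Finset.card_singleton]

section SylvesterFranke

variable {I : Type*} [Fintype I] [LinearOrder I] {k : ℕ}

theorem det_compoundMatrix_diagonal {R : Type*} [CommRing R] (hk : 1 ≤ k) (d : I → R) :
    (compoundMatrix k (diagonal d)).det =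
      (diagonal d).det ^ (Fintype.card I - 1).choose (k - 1) := by
  rw [compoundMatrix_diagonal, det_diagonal, det_diagonal, ← Finset.card_univ,
    ← prod_powersetCard_prod Finset.univ hk]
  exact (Finset.prod_subtype (Finset.univ.powersetCard k)
    (fun _ ↦ Finset.mem_powersetCard_univ) fun s ↦ ∏ i ∈ s, d i).symm

theorem det_compoundMatrix_of_two_ne_zero {K : Type*} [Field K] [NeZero (2 : K)]
    (hk : 1 ≤ k) (A : Matrix I I K) :
    (compoundMatrix k A).det = A.det ^ (Fintype.card I - 1).choose (k - 1) := by
  let detCompound : Matrix I I K →* K := detMonoidHom.comp (compoundMatrixHom k)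
  let detPow : Matrix I I K →* K :=
    (powMonoidHom ((Fintype.card I - 1).choose (k - 1))).comp detMonoidHom
  have homs_eq : detCompound = detPow :=
    matrix_monoidHom_ext_diagonal (det_compoundMatrix_diagonal hk)
  exact DFunLike.congr_fun homs_eq A

theorem det_compoundMatrix {R : Type*} [CommRing R] (hk : 1 ≤ k) (A : Matrix I I R) :
    (compoundMatrix k A).det = A.det ^ (Fintype.card I - 1).choose (k - 1) := by
  let X := mvPolynomialX I I ℤ
  have generic : (compoundMatrix k X).det = X.det ^ (Fintype.card I - 1).choose (k - 1) := by
    let F := FractionRing (MvPolynomial (I × I) ℤ)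
    apply IsFractionRing.injective (MvPolynomial (I × I) ℤ) F
    rw [← det_compoundMatrix_map, det_compoundMatrix_of_two_ne_zero hk, map_pow, RingHom.map_det,
      RingHom.mapMatrix_apply]
  let evalA := MvPolynomial.eval₂Hom (Int.castRingHom R) fun p : I × I ↦ A p.1 p.2
  have specialize : X.map evalA = A := mvPolynomialX_map_eval₂ (Int.castRingHom R) A
  rw [← specialize, det_compoundMatrix_map, generic, map_pow, RingHom.map_det,
    RingHom.mapMatrix_apply]

end SylvesterFranke

theorem det_exteriorPowerMap_general {R M : Type*} [CommRing R] [AddCommGroup M] [Module R M]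
    [Module.Free R M] [Module.Finite R M] {k : ℕ} (hk : 1 ≤ k) (f : M →ₗ[R] M) :
    LinearMap.det (exteriorPower.map k f) =
      LinearMap.det f ^ (Module.finrank R M - 1).choose (k - 1) := by
  nontriviality R
  let b := Module.finBasis R M
  rw [← LinearMap.det_toMatrix (b.exteriorPower k), toMatrix_exteriorPower_map,
    det_compoundMatrix hk, Fintype.card_fin, LinearMap.det_toMatrix]

theorem exteriorPowerMap_eq_map {K V : Type*} [Field K] [AddCommGroup V] [Module K V]
    (k : ℕ) (f : V →ₗ[K] V) : exteriorPowerMap k f = exteriorPower.map k f := by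
  refine exteriorPower.linearMap_ext (AlternatingMap.ext fun v ↦ Subtype.ext ?_)
  simp only [LinearMap.compAlternatingMap_apply, exteriorPower.map_apply_ιMulti]
  exact ExteriorAlgebra.map_apply_ιMulti f v

/-- **Sylvester–Franke identity.** If `V` is an `n`-dimensional vector space over a field `K`
and `1 ≤ k ≤ n`, then for every linear endomorphism `f` of `V` the determinant of the induced
endomorphism `Λ^k f` of the `k`-th exterior power equals `(det f) ^ (n-1).choose (k-1)`.
(This underlies `c₁(Λᵏ V) = C(n−1, k−1) · c₁(V)` for a rank-`n` bundle `V`.) -/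
theorem det_exteriorPowerMap {K V : Type*} [Field K] [AddCommGroup V] [Module K V]
    [FiniteDimensional K V] (n : ℕ) (hn : Module.finrank K V = n)
    (k : ℕ) (hk1 : 1 ≤ k) (hkn : k ≤ n) (f : V →ₗ[K] V) :
    LinearMap.det (exteriorPowerMap k f) =
      (LinearMap.det f) ^ Nat.choose (n - 1) (k - 1) := by
  rw [exteriorPowerMap_eq_map, det_exteriorPowerMap_general hk1, hn]
end

section
/- For the degree-(2,4) complete intersection Calabi–Yau in ℙ¹×ℙ³, with nonzero triple intersection numbers d₁₂₂ = 4 and d₂₂₂ = 2, the image of the open positive quadrant {(t¹,t²) ∈ ℝ² : t¹ > 0, t² > 0} under the dual Kähler moduli map s(t¹,t²) = (4(t²)², 8t¹t² + 2(t²)²) is exactly the set {(s₁,s₂) ∈ ℝ² : s₁ > 0 and 2s₂ > s₁}, i.e. the portion of the positive quadrant above the line s₂/s₁ = 1/2. -/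
/-!
The dual moduli depend on `(t¹, t²)` only through the two monomials `u = (t²)²` and `v = t¹ t²`,
and they are linear in them: `(s₁, s₂) = (d₁₂₂ u, 2 d₁₂₂ v + d₂₂₂ u)`. The monomial map sends the
open quadrant onto itself (take `t² = √u`, `t¹ = v / √u`), and the triangular linear map sends it
to the cone bounded by the images of the two axes, the rays spanned by `(0, 1)` and `(d₁₂₂, d₂₂₂)`.
-/

/-- The dual Kähler moduli `s_i = d_{ijk} t^j t^k` of a Calabi–Yau threefold with `h^{1,1} = 2`
whose only nonzero triple intersection numbers, up to permutation of the indices, are `d₁₂₂` and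
`d₂₂₂`. The coefficient `2` in `s₂` counts both orders of the index pair `(1, 2)`. -/
def dualKaehlerModuli {R : Type*} [CommSemiring R] (d₁₂₂ d₂₂₂ : R) (t : R × R) : R × R :=
  (d₁₂₂ * t.2 ^ 2, 2 * d₁₂₂ * t.1 * t.2 + d₂₂₂ * t.2 ^ 2)

theorem image_sq_mul_openQuadrant :
    (fun t : ℝ × ℝ => (t.2 ^ 2, t.1 * t.2)) '' {t | 0 < t.1 ∧ 0 < t.2} =
      {u | 0 < u.1 ∧ 0 < u.2} := by
  apply Set.Subset.antisymm
  · rintro _ ⟨t, ⟨ht₁, ht₂⟩, rfl⟩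
    exact ⟨pow_pos ht₂ 2, mul_pos ht₁ ht₂⟩
  · rintro ⟨u, v⟩ ⟨hu, hv⟩
    have hsqrt : 0 < √u := Real.sqrt_pos.mpr hu
    exact ⟨(v / √u, √u), ⟨div_pos hv hsqrt, hsqrt⟩,
      Prod.ext (Real.sq_sqrt hu.le) (div_mul_cancel₀ v hsqrt.ne')⟩

theorem image_lowerTriangular_openQuadrant {𝕜 : Type*} [Field 𝕜] [LinearOrder 𝕜]
    [IsStrictOrderedRing 𝕜] {a b : 𝕜} (ha : 0 < a) (hb : 0 < b) (c : 𝕜) :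
    (fun u : 𝕜 × 𝕜 => (a * u.1, b * u.2 + c * u.1)) '' {u | 0 < u.1 ∧ 0 < u.2} =
      {s | 0 < s.1 ∧ c * s.1 < a * s.2} := by
  apply Set.Subset.antisymm
  · rintro _ ⟨u, ⟨hu₁, hu₂⟩, rfl⟩
    have hpos : 0 < a * (b * u.2) := mul_pos ha (mul_pos hb hu₂)
    exact ⟨mul_pos ha hu₁, by linear_combination hpos⟩
  · rintro ⟨s₁, s₂⟩ ⟨hs₁, hs⟩
    refine ⟨(s₁ / a, (a * s₂ - c * s₁) / (a * b)),
      ⟨div_pos hs₁ ha, div_pos (sub_pos.mpr hs) (mul_pos ha hb)⟩, Prod.ext ?_ ?_⟩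
    · exact mul_div_cancel₀ s₁ ha.ne'
    · field_simp
      ring

theorem dual_kaehler_cone_CY_2_4_general {d₁₂₂ : ℝ} (hd : 0 < d₁₂₂) (d₂₂₂ : ℝ) :
    dualKaehlerModuli d₁₂₂ d₂₂₂ '' {t | 0 < t.1 ∧ 0 < t.2} =
      {s | 0 < s.1 ∧ d₂₂₂ * s.1 < d₁₂₂ * s.2} := by
  have factorization : dualKaehlerModuli d₁₂₂ d₂₂₂ =
      (fun u : ℝ × ℝ => (d₁₂₂ * u.1, 2 * d₁₂₂ * u.2 + d₂₂₂ * u.1)) ∘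
        fun t : ℝ × ℝ => (t.2 ^ 2, t.1 * t.2) := by
    funext t
    simp only [dualKaehlerModuli, Function.comp_apply, mul_assoc]
  rw [factorization, Set.image_comp, image_sq_mul_openQuadrant,
    image_lowerTriangular_openQuadrant hd (mul_pos two_pos hd)]

/-- For the degree-(2,4) complete intersection Calabi–Yau in ℙ¹×ℙ³ (with nonzero triple
intersection numbers `d₁₂₂ = 4`, `d₂₂₂ = 2`), the image of the open positive quadrant of
Kähler moduli `(t¹, t²)` under the dual Kähler moduli map
`s(t¹,t²) = (4 (t²)², 8 t¹ t² + 2 (t²)²)` is exactly the part of the positive quadrant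
above the line `s₂/s₁ = 1/2`, i.e. `{(s₁,s₂) | 0 < s₁ ∧ s₁ < 2 s₂}`. -/
theorem dual_kaehler_cone_CY_2_4 :
    (fun t : ℝ × ℝ => (4 * t.2 ^ 2, 8 * t.1 * t.2 + 2 * t.2 ^ 2)) ''
        {t : ℝ × ℝ | 0 < t.1 ∧ 0 < t.2} =
      {s : ℝ × ℝ | 0 < s.1 ∧ s.1 < 2 * s.2} := by
  convert dual_kaehler_cone_CY_2_4_general four_pos 2 using 3 <;> grind [dualKaehlerModuli]
end
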